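/- Let f: F_2^3 → F_2 be the elementary CA rule 30, i.e. f(x_1, x_2, x_3) = x_1 ⊕ x_2 ⊕ x_3 ⊕ x_2 x_3. Then for every n with 3 ≤ n ≤ 20, the function f*: F_2^n → F_2 given by the CA-based construction is both balanced and semi-bent. -/

import Mathlib

/-- The CA-based construction: given a local rule `f` of `m` variables and `n ≥ m`,
the `n`-variable function `f*` is the XOR of all output cells of the no-boundary CA. -/
def caStar (m n : ℕ) (h : m ≤ n) (f : (Fin m → ZMod 2) → ZMod 2) :
    (Fin n → ZMod 2) → ZMod 2 :=
  fun x => ∑ i : Fin (n - m + 1),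
    f (fun j => x ⟨i.val + j.val, by have hi := i.isLt; have hj := j.isLt; omega⟩)

/-- The ANF coefficient `a_I` of a Boolean function, via the Möbius transform:
`a_I = ⊕_{x : supp(x) ⊆ I} f(x)`. -/
def anf {n : ℕ} (f : (Fin n → ZMod 2) → ZMod 2) (I : Finset (Fin n)) : ZMod 2 :=
  ∑ x ∈ Finset.univ.filter (fun x : Fin n → ZMod 2 => ∀ i, x i = 1 → i ∈ I), f x

/-- The algebraic degree of a Boolean function: `max {|I| : a_I ≠ 0}` (0 for the zero function). -/
def algDegree {n : ℕ} (f : (Fin n → ZMod 2) → ZMod 2) : ℕ :=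
  (Finset.univ.filter fun I : Finset (Fin n) => anf f I ≠ 0).sup Finset.card

/-- The Walsh transform `W_f(a) = Σ_x (-1)^(f(x) ⊕ a·x)`. -/
def walsh {n : ℕ} (f : (Fin n → ZMod 2) → ZMod 2) (a : Fin n → ZMod 2) : ℤ :=
  ∑ x : Fin n → ZMod 2, (-1 : ℤ) ^ (f x + ∑ i, a i * x i).val

/-- The semi-bent value `λ`: `2^((n+1)/2)` for odd `n`, `2^((n+2)/2)` for even `n`. -/
def sbLambda (n : ℕ) : ℤ := if Odd n then 2 ^ ((n + 1) / 2) else 2 ^ ((n + 2) / 2)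

/-- A Boolean function is semi-bent if its Walsh transform takes only the values `0, λ, -λ`. -/
def semiBent {n : ℕ} (f : (Fin n → ZMod 2) → ZMod 2) : Prop :=
  ∀ a, walsh f a = 0 ∨ walsh f a = sbLambda n ∨ walsh f a = -sbLambda n

/-- A Boolean function is balanced if it takes the value 1 exactly `2^(n-1)` times. -/
def balanced {n : ℕ} (f : (Fin n → ZMod 2) → ZMod 2) : Prop :=
  (Finset.univ.filter fun x => f x = 1).card = 2 ^ (n - 1)

/-- `b` is a linear structure of `g` if the derivative `D_b g(x) = g(x) ⊕ g(x ⊕ b)` is constant. -/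
def isLinearStructure {n : ℕ} (g : (Fin n → ZMod 2) → ZMod 2)
    (b : Fin n → ZMod 2) : Prop :=
  (∀ x, g x + g (x + b) = 0) ∨ (∀ x, g x + g (x + b) = 1)

/-- Elementary CA rule 30: `f(x₁,x₂,x₃) = x₁ ⊕ x₂ ⊕ x₃ ⊕ x₂x₃`. -/
def rule30 : (Fin 3 → ZMod 2) → ZMod 2 :=
  fun x => x 0 + x 1 + x 2 + x 1 * x 2

/-!
Adding a linear form only translates the Walsh spectrum, so the linear part of `f*` matters only
through the coefficient of `x₁`, which is `1`. What is left is the path form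
`x₂x₃ + x₃x₄ + ⋯ + xₙ₋₁xₙ`, in which `x₁` does not occur: hence `W_{f*}(a)` vanishes unless
`a₁ = 1`, in particular at `a = 0`, and otherwise it is twice a Walsh coefficient of the path form.
Summing over an end vertex of the path pins the value of its neighbour, which removes two vertices
and multiplies the Walsh transform by `±2`; this determines the spectrum of the path form by
induction.
-/

section Walsh

variable {n : ℕ}

/-- The additive character `z ↦ (-1)^z` of `𝔽₂`, with values in `ℤ`. -/
def signChar : AddChar (ZMod 2) ℤ := AddChar.zmodChar 2 neg_one_sq

theorem signChar_eq_one_or_neg_one (z : ZMod 2) : signChar z = 1 ∨ signChar z = -1 := by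
  revert z; decide

theorem signChar_eq_one_sub_ite (z : ZMod 2) :
    signChar z = 1 - 2 * if z = 1 then 1 else 0 := by
  revert z; decide

theorem sum_signChar_mul (z : ZMod 2) : ∑ t, signChar (t * z) = if z = 0 then 2 else 0 := by
  revert z; decide

theorem walsh_eq_sum_signChar (f : (Fin n → ZMod 2) → ZMod 2) (a : Fin n → ZMod 2) :
    walsh f a = ∑ x, signChar (f x + a ⬝ᵥ x) :=
  rfl

theorem sum_pi_fin_succ {α M : Type*} [Fintype α] [AddCommMonoid M]
    (F : (Fin (n + 1) → α) → M) :
    ∑ x, F x = ∑ t, ∑ y : Fin n → α, F (Fin.cons t y) := by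
  rw [← Fintype.sum_prod_type']
  exact ((Fin.consEquiv fun _ => α).sum_comp F).symm

theorem dotProduct_cons {R : Type*} [NonUnitalNonAssocSemiring R]
    (a : Fin (n + 1) → R) (t : R) (y : Fin n → R) :
    a ⬝ᵥ (Fin.cons t y : Fin (n + 1) → R) = a 0 * t + Fin.tail a ⬝ᵥ y := by
  simp [dotProduct, Fin.sum_univ_succ, Fin.tail]

theorem walsh_add_linear (f : (Fin n → ZMod 2) → ZMod 2)
    (L : Module.Dual (ZMod 2) (Fin n → ZMod 2)) (a : Fin n → ZMod 2) :
    walsh (fun x => f x + L x) a = walsh f (a + fun i => L (Pi.single i 1)) := by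
  have L_apply (x) : L x = (fun i => L (Pi.single i 1)) ⬝ᵥ x :=
    (LinearMap.congr_fun ((dotProductEquiv (ZMod 2) (Fin n)).apply_symm_apply L) x).symm
  simp only [walsh_eq_sum_signChar, add_dotProduct]
  refine Finset.sum_congr rfl fun x _ => ?_
  rw [L_apply x, add_assoc, add_comm (_ ⬝ᵥ x)]

theorem walsh_comp_tail (g : (Fin n → ZMod 2) → ZMod 2) (a : Fin (n + 1) → ZMod 2) :
    walsh (fun x => g (Fin.tail x)) a = if a 0 = 0 then 2 * walsh g (Fin.tail a) else 0 := by
  calc walsh (fun x => g (Fin.tail x)) a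
      = (∑ t, signChar (t * a 0)) * walsh g (Fin.tail a) := by
        simp only [walsh_eq_sum_signChar, sum_pi_fin_succ, dotProduct_cons, Fin.tail_cons,
          Finset.sum_mul_sum, ← AddChar.map_add_eq_mul]
        refine Finset.sum_congr rfl fun t _ => Finset.sum_congr rfl fun y _ => ?_
        ring_nf
    _ = if a 0 = 0 then 2 * walsh g (Fin.tail a) else 0 := by
        rw [sum_signChar_mul, ite_mul, zero_mul]

theorem balanced_of_walsh_zero_eq_zero (hn : n ≠ 0) {f : (Fin n → ZMod 2) → ZMod 2}
    (hf : walsh f 0 = 0) : balanced f := by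
  obtain ⟨m, rfl⟩ := Nat.exists_eq_succ_of_ne_zero hn
  have walsh_zero_eq_card :
      walsh f 0 = 2 ^ (m + 1) - 2 * (Finset.univ.filter fun x => f x = 1).card := by
    simp [walsh_eq_sum_signChar, signChar_eq_one_sub_ite, Finset.sum_sub_distrib, Finset.sum_ite,
      mul_comm]
  have card_eq : ((Finset.univ.filter fun x => f x = 1).card : ℤ) = 2 ^ m := by
    rw [pow_succ] at walsh_zero_eq_card
    linarith
  exact_mod_cast card_eq

end Walsh

/-- A Boolean function is plateaued with amplitude `μ` if its Walsh transform takes only the values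
`0, μ, -μ`. Being semi-bent is the case `μ = sbLambda n`. -/
def IsPlateaued {n : ℕ} (f : (Fin n → ZMod 2) → ZMod 2) (μ : ℤ) : Prop :=
  ∀ a, walsh f a = 0 ∨ walsh f a = μ ∨ walsh f a = -μ

namespace IsPlateaued

variable {n : ℕ} {μ : ℤ}

theorem add_linear {f : (Fin n → ZMod 2) → ZMod 2} (hf : IsPlateaued f μ)
    (L : Module.Dual (ZMod 2) (Fin n → ZMod 2)) : IsPlateaued (fun x => f x + L x) μ :=
  fun a => walsh_add_linear f L a ▸ hf _

theorem comp_tail {g : (Fin n → ZMod 2) → ZMod 2} (hg : IsPlateaued g μ) :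
    IsPlateaued (fun x : Fin (n + 1) → ZMod 2 => g (Fin.tail x)) (2 * μ) := by
  intro a
  rw [walsh_comp_tail]
  grind [hg (Fin.tail a)]

end IsPlateaued

theorem sbLambda_eq_two_pow (n : ℕ) : sbLambda n = 2 ^ (n / 2 + 1) := by
  grind [sbLambda]

section PathForm

variable {n : ℕ}

/-- The quadratic form `x₀x₁ + x₁x₂ + ⋯ + xₙ₋₁xₙ` of the path with `n` edges, hence with `n + 1`
variables. For rule 30 it is the quadratic part of `f*`, as a function of all variables but the
first. -/
def pathForm (n : ℕ) (x : Fin (n + 1) → ZMod 2) : ZMod 2 :=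
  ∑ i : Fin n, x i.castSucc * x i.succ

theorem pathForm_cons (t : ZMod 2) (x : Fin (n + 1) → ZMod 2) :
    pathForm (n + 1) (Fin.cons t x) = t * x 0 + pathForm n x := by
  simp [pathForm, Fin.sum_univ_succ (n := n)]

theorem walsh_pathForm_add_two (a : Fin (n + 3) → ZMod 2) :
    walsh (pathForm (n + 2)) a =
      2 * signChar (a 0 * a 1) *
        walsh (pathForm n) (Fin.tail (Fin.tail a) + Pi.single 0 (a 0)) := by
  let G (s : ZMod 2) (y : Fin (n + 1) → ZMod 2) : ZMod 2 :=
    a 1 * s + (pathForm n y + (Fin.tail (Fin.tail a) + Pi.single 0 s) ⬝ᵥ y)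
  have tail_zero : Fin.tail a 0 = a 1 := rfl
  have exponent_cons (t s : ZMod 2) (y : Fin (n + 1) → ZMod 2) :
      pathForm (n + 2) (Fin.cons t (Fin.cons s y)) +
        a ⬝ᵥ (Fin.cons t (Fin.cons s y) : Fin (n + 3) → ZMod 2) = t * (s + a 0) + G s y := by
    simp only [G, pathForm_cons, dotProduct_cons, add_dotProduct, single_dotProduct, Fin.cons_zero,
      tail_zero]
    ring
  calc walsh (pathForm (n + 2)) a
      = ∑ s, (∑ t, signChar (t * (s + a 0))) * ∑ y, signChar (G s y) := by
        simp only [walsh_eq_sum_signChar, sum_pi_fin_succ (n := n + 2),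
          sum_pi_fin_succ (n := n + 1), exponent_cons]
        rw [Finset.sum_comm]
        simp only [AddChar.map_add_eq_mul, Finset.sum_mul_sum]
    _ = 2 * ∑ y, signChar (G (a 0) y) := by
        simp [sum_signChar_mul, CharTwo.add_eq_zero]
    _ = _ := by
        simp only [G, walsh_eq_sum_signChar, AddChar.map_add_eq_mul, ← Finset.mul_sum, mul_assoc,
          mul_comm (a 1)]

theorem isPlateaued_pathForm (n : ℕ) : IsPlateaued (pathForm n) (2 ^ (n / 2 + 1)) := by
  induction n using Nat.twoStepInduction with
  | zero => unfold IsPlateaued; decide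
  | one => unfold IsPlateaued; decide
  | more n ih _ =>
    intro a
    rw [walsh_pathForm_add_two, Nat.add_div_right n two_pos]
    rcases signChar_eq_one_or_neg_one (a 0 * a 1) with hs | hs <;> rw [hs] <;>
      grind [ih (Fin.tail (Fin.tail a) + Pi.single 0 (a 0))]

end PathForm

section Rule30

variable {n : ℕ}

/-- The linear form `∑ᵢ (xᵢ + xᵢ₊₁ + xᵢ₊₂)` over all windows of length three, which is the linear
part of `f*` for rule 30. -/
def windowSum (n : ℕ) : Module.Dual (ZMod 2) (Fin (n + 3) → ZMod 2) where
  toFun x := ∑ i : Fin (n + 1), (x i.castSucc.castSucc + x i.castSucc.succ + x i.succ.succ)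
  map_add' x y := by simp only [Pi.add_apply, Finset.sum_add_distrib]; ring
  map_smul' c x := by simp [Finset.mul_sum, mul_add]

theorem windowSum_single_zero (n : ℕ) : windowSum n (Pi.single 0 1) = 1 := by
  have two_ne : (2 : Fin (n + 3)) ≠ 0 := Fin.succ_one_eq_two ▸ Fin.succ_ne_zero 1
  simp [windowSum, Fin.sum_univ_succ, two_ne]

theorem caStar_rule30 (h : 3 ≤ n + 3) :
    caStar 3 (n + 3) h rule30 = fun x => pathForm (n + 1) (Fin.tail x) + windowSum n x := by
  funext x
  rw [add_comm (pathForm _ _)]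
  exact Finset.sum_add_distrib

theorem balanced_caStar_rule30 (h : 3 ≤ n + 3) : balanced (caStar 3 (n + 3) h rule30) := by
  apply balanced_of_walsh_zero_eq_zero (by omega)
  rw [caStar_rule30, walsh_add_linear _ (windowSum n), walsh_comp_tail]
  simp [windowSum_single_zero]

theorem semiBent_caStar_rule30 (h : 3 ≤ n + 3) : semiBent (caStar 3 (n + 3) h rule30) := by
  have amplitude : sbLambda (n + 3) = 2 * 2 ^ ((n + 1) / 2 + 1) := by
    rw [sbLambda_eq_two_pow, ← pow_succ', show (n + 3) / 2 = (n + 1) / 2 + 1 by omega]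
  change IsPlateaued _ (sbLambda (n + 3))
  rw [caStar_rule30, amplitude]
  exact (isPlateaued_pathForm (n + 1)).comp_tail.add_linear (windowSum n)

end Rule30

theorem rule30_balanced_semibent_general (n : ℕ) (h : 3 ≤ n) :
    balanced (caStar 3 n h rule30) ∧ semiBent (caStar 3 n h rule30) := by
  obtain ⟨k, rfl⟩ := Nat.exists_eq_add_of_le' h
  exact ⟨balanced_caStar_rule30 h, semiBent_caStar_rule30 h⟩

/-- rule 30 yields balanced semi-bent functions for all `3 ≤ n ≤ 20`. -/
theorem rule30_balanced_semibent :
    ∀ n (h : 3 ≤ n), n ≤ 20 →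
      balanced (caStar 3 n h rule30) ∧ semiBent (caStar 3 n h rule30) :=
  fun n h _ => rule30_balanced_semibent_general n h
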